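/- Let λ be a partition of n and k ≥ 1. For T ∈ SYT(λ) and σ⃗ = (σ^1,…,σ^{k−1}) ∈ S_n^{k−1}, with R = des(T), σ^k = ε, and Z^k = Z_{R,σ^k}(Z_{R,σ^{k−1}}(⋯(Z_{R,σ^1}(∅))⋯)) = (z^1,…,z^n) ∈ (ℕ^k)^n (∅ the list of n empty sequences), let P_{T,σ⃗} be the filling of the Young diagram of λ obtained from T by replacing each entry i by the sequence z^i, and let 𝒯^k_λ = { P_{T,σ⃗} : T ∈ SYT(λ), σ⃗ ∈ S_n^{k−1} }. Then, as formal power series in q_1,…,q_k: (Π_{i=1}^k (q_i;q_i)_n) · Σ_{T ∈ SYT(λ)} Σ_{S ∈ (ℕ^k)^n with σ_{des(T)}(S) = ε} q^S = Σ_{P ∈ 𝒯^k_λ} q^P, where for P = P_{T,σ⃗} with entry list (z^1,…,z^n) we set q^P = q^{(z^1,…,z^n)} and the right-hand sum runs over the distinct elements of the set 𝒯^k_λ. -/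

import Mathlib

open scoped Classical

namespace RomeroComaj

noncomputable section

/-- `Seq r` is `ℕ^r`, the type of sequences of natural numbers of length `r`. -/
abbrev Seq (r : ℕ) := Fin r → ℕ

/-- strict lexicographic order on `ℕ^r`. -/
def lexLt {r : ℕ} (a b : Seq r) : Prop :=
  ∃ i : Fin r, (∀ j : Fin r, j < i → a j = b j) ∧ a i < b i

/-- weak lexicographic order on `ℕ^r`. -/
def lexLe {r : ℕ} (a b : Seq r) : Prop :=
  lexLt a b ∨ a = b

/-- `RNbr R a b` : the (1-indexed) indices `a` and `b` are `R`-neighbors,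
i.e. (for `a < b`) all of `a, a+1, …, b-1` lie in `R`. -/
def RNbr (R : Finset ℕ) (a b : ℕ) : Prop :=
  ∀ t ∈ Finset.Ico (min a b) (max a b), t ∈ R

/-- the value `σ_i` of the one-line notation of `σ`, both position `i` and
the value being 1-indexed (junk value `0` outside `1 ≤ i ≤ n`). -/
def pget {n : ℕ} (σ : Equiv.Perm (Fin n)) (i : ℕ) : ℕ :=
  if h : i - 1 < n then (σ ⟨i - 1, h⟩).val + 1 else 0

/-- the sequence `s^i` of a list `S = (s^1, …, s^n)`, `i` being 1-indexed. -/
def sget {n r : ℕ} (S : Fin n → Seq r) (i : ℕ) : Seq r :=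
  if h : i - 1 < n then S ⟨i - 1, h⟩ else 0

/-- the condition for `i` to belong to `Des_{R,S}(σ)`:
`s^{σ_i} > s^{σ_{i+1}} − χ(σ_{i+1} < σ_i ∧ σ_{i+1} ≁_R σ_i) − χ(σ_{i+1} > σ_i ∧ σ_i ∼_R σ_{i+1})`. -/
def desCond {n r : ℕ} (R : Finset ℕ) (S : Fin n → Seq r) (σ : Equiv.Perm (Fin n)) (i : ℕ) :
    Prop :=
  if (pget σ (i+1) < pget σ i ∧ ¬ RNbr R (pget σ (i+1)) (pget σ i)) ∨
      (pget σ i < pget σ (i+1) ∧ RNbr R (pget σ i) (pget σ (i+1)))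
  then lexLe (sget S (pget σ (i+1))) (sget S (pget σ i))
  else lexLt (sget S (pget σ (i+1))) (sget S (pget σ i))

/-- `Des_{R,S}(σ) ⊆ {1, …, n−1}` (1-indexed positions). -/
def DesSet {n r : ℕ} (R : Finset ℕ) (S : Fin n → Seq r) (σ : Equiv.Perm (Fin n)) : Finset ℕ :=
  (Finset.Icc 1 (n-1)).filter (fun i => desCond R S σ i)

/-- `Comaj_{R,S}(σ) = ∑_{i ∈ Des_{R,S}(σ)} (n − i)`. -/
def Comaj {n r : ℕ} (R : Finset ℕ) (S : Fin n → Seq r) (σ : Equiv.Perm (Fin n)) : ℕ :=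
  ∑ i ∈ DesSet R S σ, (n - i)

/-- `s^i` is read before `s^j` in the reading order of `S` (with respect to `R`);
`i, j` are 1-indexed. -/
def readBefore {n r : ℕ} (R : Finset ℕ) (S : Fin n → Seq r) (i j : ℕ) : Prop :=
  lexLt (sget S i) (sget S j) ∨
    (sget S i = sget S j ∧ ((i < j ∧ ¬ RNbr R i j) ∨ (j < i ∧ RNbr R j i)))

/-- `IsReading R S σ` says that the reading permutation `σ_R(S)` equals `σ`,
i.e. `σ` lists `1, …, n` in the reading order of `S`. -/
def IsReading {n r : ℕ} (R : Finset ℕ) (S : Fin n → Seq r) (σ : Equiv.Perm (Fin n)) : Prop :=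
  ∀ i ∈ Finset.Icc 1 (n-1), readBefore R S (pget σ i) (pget σ (i+1))

/-- the operator `Z_{R,σ} : (ℕ^r)^n → (ℕ^{r+1})^n`, prepending to `s^v` the number of
descents of `σ` (w.r.t. `R, S`) at positions strictly before the position of `v` in `σ`. -/
def Zop {n r : ℕ} (R : Finset ℕ) (σ : Equiv.Perm (Fin n)) (S : Fin n → Seq r) :
    Fin n → Seq (r+1) :=
  fun v => Fin.cons ((DesSet R S σ ∩ Finset.Ico 1 ((σ.symm v).val + 1)).card) (S v)

/-- `Zvec R σs i = Z_{R,σ^i} ⋯ Z_{R,σ^1}(∅)` where `σ^{j+1} = σs j`. -/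
def Zvec {n : ℕ} (R : Finset ℕ) (σs : ℕ → Equiv.Perm (Fin n)) : (i : ℕ) → Fin n → Seq i
  | 0 => fun _ => (0 : Seq 0)
  | (i+1) => Zop R (σs i) (Zvec R σs i)

/-- extend a finite vector of permutations to `ℕ`, by the identity. -/
def extFun {n r : ℕ} (σv : Fin r → Equiv.Perm (Fin n)) : ℕ → Equiv.Perm (Fin n) :=
  fun j => if h : j < r then σv ⟨j, h⟩ else 1

/-- `comajI R k σv i = comaj^i_R(σ⃗)` for `1 ≤ i ≤ k`, where `σ⃗ = σv` has length `k−1`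
and `σ^k = ε`. -/
def comajI {n : ℕ} (R : Finset ℕ) (k : ℕ) (σv : Fin (k-1) → Equiv.Perm (Fin n)) (i : ℕ) : ℕ :=
  Comaj R (Zvec R (extFun σv) (i-1)) (extFun σv (i-1))

/-- the exponent of the monomial `q^S` for `S ∈ (ℕ^r)^n` : the (0-indexed) variable `i`
(that is, `q_{i+1}`) records the `(r−i)`-th (0-indexed: `r−1−i`-th) coordinates. -/
def expOf {n r : ℕ} (S : Fin n → Seq r) : Fin r →₀ ℕ :=
  Finsupp.equivFunOnFinite.symm (fun i => ∑ j : Fin n, S j (Fin.rev i))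

/-- the formal power series whose coefficient at a monomial `d` counts the elements
`a : α` satisfying `P a d`. -/
def countSeriesP {σty α : Type*} (P : α → (σty →₀ ℕ) → Prop) : MvPowerSeries σty ℤ :=
  fun d => (Nat.card {a : α // P a d} : ℤ)

/-- `∑_{S ∈ (ℕ^r)^n, P S} q^S`. -/
def countSeries {n r : ℕ} (P : (Fin n → Seq r) → Prop) : MvPowerSeries (Fin r) ℤ :=
  countSeriesP (fun S d => P S ∧ expOf S = d)

/-- the Pochhammer factor `(q_i; q_i)_n = ∏_{j=1}^n (1 − q_i^j)`. -/
def pochOne {r : ℕ} (n : ℕ) (i : Fin r) : MvPowerSeries (Fin r) ℤ :=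
  ∏ j ∈ Finset.Icc 1 n, (1 - (MvPowerSeries.X i : MvPowerSeries (Fin r) ℤ) ^ j)

/-- `∏_{i=1}^{r} (q_i; q_i)_n`. -/
def pochAll (n r : ℕ) : MvPowerSeries (Fin r) ℤ :=
  ∏ i : Fin r, pochOne n i

/-- the exponent of `q_1^{comaj¹_R(σ⃗)} ⋯ q_k^{comaj^k_R(σ⃗)}`. -/
def comajExp {n : ℕ} (R : Finset ℕ) (k : ℕ) (σv : Fin (k-1) → Equiv.Perm (Fin n)) :
    Fin k →₀ ℕ :=
  Finsupp.equivFunOnFinite.symm (fun i => comajI R k σv (i.val + 1))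

/-- A standard Young tableau of shape `μ` (with `μ.card` cells), recorded by the
position `pos i` of each (1-indexed) entry `i ∈ {1, …, μ.card}`; entries increase
left-to-right along rows and down columns (matrix convention), and `pos` is a
bijection from `{1, …, μ.card}` onto the cells of `μ` (normalized by `0` outside). -/
structure SYT (μ : YoungDiagram) where
  pos : ℕ → ℕ × ℕ
  mem : ∀ i ∈ Finset.Icc 1 μ.card, pos i ∈ μ
  inj : ∀ i ∈ Finset.Icc 1 μ.card, ∀ j ∈ Finset.Icc 1 μ.card, pos i = pos j → i = j
  surj : ∀ c ∈ μ, ∃ i ∈ Finset.Icc 1 μ.card, pos i = c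
  row_inc : ∀ i ∈ Finset.Icc 1 μ.card, ∀ j ∈ Finset.Icc 1 μ.card,
    (pos i).1 = (pos j).1 → (pos i).2 < (pos j).2 → i < j
  col_inc : ∀ i ∈ Finset.Icc 1 μ.card, ∀ j ∈ Finset.Icc 1 μ.card,
    (pos i).2 = (pos j).2 → (pos i).1 < (pos j).1 → i < j
  junk : ∀ i, i ∉ Finset.Icc 1 μ.card → pos i = 0

/-- `des(T)` : the set of `i ∈ {1, …, n−1}` such that `i+1` lies in a strictly
higher row of `T` than `i` (in matrix convention: a strictly larger row index). -/
def desSYT {μ : YoungDiagram} (T : SYT μ) : Finset ℕ :=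
  (Finset.Icc 1 (μ.card - 1)).filter (fun i => (T.pos i).1 < (T.pos (i+1)).1)

/-- the ordinary descent set `des(π) = {i : π_i > π_{i+1}}` (1-indexed). -/
def desPerm {n : ℕ} (π : Equiv.Perm (Fin n)) : Finset ℕ :=
  (Finset.Icc 1 (n-1)).filter (fun i => pget π (i+1) < pget π i)

/-- `comaj(π) = ∑_{i ∈ des(π)} (n − i)`. -/
def comajP {n : ℕ} (π : Equiv.Perm (Fin n)) : ℕ :=
  ∑ i ∈ desPerm π, (n - i)


/-- the filling of the Young diagram `μ` placing the sequence `Z i` in the cell of `T`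
containing `i` (and `0` outside `μ`). -/
def fillOf {μ : YoungDiagram} (k : ℕ) (T : SYT μ) (Z : ℕ → Seq k) : ℕ × ℕ → Seq k :=
  fun c => if h : ∃ i, i ∈ Finset.Icc 1 μ.card ∧ T.pos i = c then Z h.choose else 0

/-- the exponent of the monomial `q^P` of a filling `P` of `μ` by sequences in `ℕ^k`. -/
def expFill (μ : YoungDiagram) {k : ℕ} (P : ℕ × ℕ → Seq k) : Fin k →₀ ℕ :=
  Finsupp.equivFunOnFinite.symm (fun i => ∑ c ∈ μ.cells, P c (Fin.rev i))

/-!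
Let `S` be a list in `(ℕ^r)^n` and prepend one more coordinate to each of its sequences. The new
list has reading permutation `σ` if and only if the new coordinates, read along `σ`, are the numbers
of descents of `σ` before each position plus a weakly increasing sequence. Since the new reading
permutation also determines the descents of the next step, a list in `(ℕ^k)^n` is the same as `k`
permutations, the last of which is its reading permutation, and `k` weakly increasing sequences;
the sequences contribute additively to the exponent, and setting them to `0` gives `Z^k`. Weakly
increasing sequences of length `n` have generating function `1 / (q; q)_n`, so the Pochhammer
factors cancel them. Finally, a filling with reading permutation `ε` determines its tableau: the
entries of the tableau number the cells by increasing content, and cells of equal content going up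
the rows, each row from left to right.
-/

section WeightSeries

variable {σ α β : Type*}

/-- The generating series `∑_{a : α} q^{w a}` of a set weighted by `w`. It is meaningful when the
fibres of `w` are finite, since `Nat.card` sends an infinite fibre to `0`. -/
def weightSeries (w : α → σ →₀ ℕ) : MvPowerSeries σ ℤ :=
  countSeriesP fun a d => w a = d

lemma coeff_weightSeries (w : α → σ →₀ ℕ) (d : σ →₀ ℕ) :
    MvPowerSeries.coeff d (weightSeries w) = Nat.card {a // w a = d} :=
  rfl

lemma countSeriesP_and_eq (p : α → Prop) (w : α → σ →₀ ℕ) :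
    countSeriesP (fun a d => p a ∧ w a = d) = weightSeries fun a : {a // p a} => w a := by
  ext d
  exact congrArg Nat.cast
    (Nat.card_congr (Equiv.subtypeSubtypeEquivSubtypeInter p fun a => w a = d).symm)

lemma weightSeries_comp_equiv (w : β → σ →₀ ℕ) (e : α ≃ β) :
    weightSeries (w ∘ e) = weightSeries w := by
  ext d
  exact congrArg Nat.cast (Nat.card_congr (e.subtypeEquiv fun _ => Iff.rfl))

lemma weightSeries_sumElim (w : α → σ →₀ ℕ) (w' : β → σ →₀ ℕ)
    [∀ d, Finite {a // w a = d}] [∀ d, Finite {b // w' b = d}] :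
    weightSeries (Sum.elim w w') = weightSeries w + weightSeries w' := by
  ext d
  have : Nat.card {c // Sum.elim w w' c = d} =
      Nat.card {a // w a = d} + Nat.card {b // w' b = d} := by
    rw [← Nat.card_sum]
    exact Nat.card_congr Equiv.subtypeSum
  rw [map_add, coeff_weightSeries, coeff_weightSeries, coeff_weightSeries, this, Nat.cast_add]

lemma weightSeries_const_add (v : σ →₀ ℕ) (w : α → σ →₀ ℕ) :
    weightSeries (fun a => v + w a) = MvPowerSeries.monomial v 1 * weightSeries w := by
  ext d
  rw [MvPowerSeries.coeff_monomial_mul, one_mul, coeff_weightSeries, coeff_weightSeries]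
  split_ifs with hvd
  · refine congrArg Nat.cast (Nat.card_congr (Equiv.subtypeEquivRight fun a => ?_))
    rw [add_comm, eq_tsub_iff_add_eq_of_le hvd]
  · have : IsEmpty {a // v + w a = d} := ⟨fun a => hvd (a.2 ▸ le_self_add)⟩
    rw [Nat.card_of_isEmpty, Nat.cast_zero]

lemma finite_fiber_add_nsmul (w : α → σ →₀ ℕ) [∀ d, Finite {a // w a = d}] {v : σ →₀ ℕ}
    (hv : v ≠ 0) (d : σ →₀ ℕ) : Finite {x : α × ℕ // w x.1 + x.2 • v = d} := by
  obtain ⟨i, hi⟩ := Finsupp.ne_iff.mp hv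
  have le_of_fiber (x : {x : α × ℕ // w x.1 + x.2 • v = d}) : x.1.2 ≤ d i :=
    calc x.1.2 ≤ x.1.2 * v i := Nat.le_mul_of_pos_right _ (Nat.pos_of_ne_zero hi)
      _ ≤ w x.1.1 i + x.1.2 * v i := Nat.le_add_left _ _
      _ = d i := DFunLike.congr_fun x.2 i
  let code (x : {x : α × ℕ // w x.1 + x.2 • v = d}) :
      (Σ e : Finset.Iic d, {a // w a = e.1}) × Finset.Iic (d i) :=
    (⟨⟨w x.1.1, Finset.mem_Iic.mpr (le_self_add.trans_eq x.2)⟩, x.1.1, rfl⟩,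
      ⟨x.1.2, Finset.mem_Iic.mpr (le_of_fiber x)⟩)
  refine Finite.of_injective code fun x y hxy => Subtype.ext (Prod.ext ?_ ?_)
  · exact congrArg (fun c => c.1.2.1) hxy
  · exact congrArg (fun c => c.2.1) hxy

lemma one_sub_monomial_mul_weightSeries (w : α → σ →₀ ℕ) [∀ d, Finite {a // w a = d}]
    {v : σ →₀ ℕ} (hv : v ≠ 0) :
    (1 - MvPowerSeries.monomial v 1) * weightSeries (fun x : α × ℕ => w x.1 + x.2 • v) =
      weightSeries w := by
  set w' : α × ℕ → σ →₀ ℕ := fun x => w x.1 + x.2 • v with hw'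
  have hfin (d) : Finite {x // w' x = d} := finite_fiber_add_nsmul w hv d
  have hfin' (d) : Finite {x // v + w' x = d} :=
    Finite.of_injective (β := {x // w' x = d - v})
      (fun x => ⟨x, (tsub_eq_of_eq_add_rev x.2.symm).symm⟩)
      fun _ _ h => Subtype.ext (Subtype.mk.inj h)
  let splitZero : α × ℕ ≃ α ⊕ α × ℕ :=
    { toFun
        | (a, 0) => Sum.inl a
        | (a, m + 1) => Sum.inr (a, m)
      invFun := Sum.elim (fun a => (a, 0)) (fun x => (x.1, x.2 + 1))
      left_inv := by rintro ⟨a, _ | m⟩ <;> rfl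
      right_inv := by rintro (a | x) <;> rfl }
  have split : w' = Sum.elim w (fun x => v + w' x) ∘ splitZero := by
    funext ⟨a, m⟩
    cases m with
    | zero => simp [hw', splitZero]
    | succ m => simp [hw', splitZero, add_smul, add_comm, add_left_comm]
  have recurrence :
      weightSeries w' = weightSeries w + MvPowerSeries.monomial v 1 * weightSeries w' := by
    conv_lhs => rw [split, weightSeries_comp_equiv, weightSeries_sumElim, weightSeries_const_add]
  rwa [sub_mul, one_mul, sub_eq_iff_eq_add]

lemma prod_fin_one_sub_monomial_mul_weightSeries {m : ℕ} (w : α → σ →₀ ℕ)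
    [∀ d, Finite {a // w a = d}] {v : Fin m → σ →₀ ℕ} (hv : ∀ i, v i ≠ 0) :
    (∏ i, (1 - MvPowerSeries.monomial (v i) 1)) *
      weightSeries (fun x : α × (Fin m → ℕ) => w x.1 + ∑ i, x.2 i • v i) = weightSeries w := by
  induction m generalizing α with
  | zero =>
    simp only [Finset.univ_eq_empty, Finset.prod_empty, one_mul, Finset.sum_empty, add_zero]
    exact weightSeries_comp_equiv w (Equiv.prodUnique α (Fin 0 → ℕ))
  | succ m ih =>
    have hfin (d) : Finite {x : α × ℕ // w x.1 + x.2 • v 0 = d} :=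
      finite_fiber_add_nsmul w (hv 0) d
    let splitFirst : α × (Fin (m + 1) → ℕ) ≃ (α × ℕ) × (Fin m → ℕ) :=
      ((Equiv.refl α).prodCongr (Fin.consEquiv _).symm).trans (Equiv.prodAssoc _ _ _).symm
    have reindex : weightSeries (fun x : α × (Fin (m + 1) → ℕ) => w x.1 + ∑ i, x.2 i • v i) =
        weightSeries (fun x : (α × ℕ) × (Fin m → ℕ) =>
          w x.1.1 + x.1.2 • v 0 + ∑ i, x.2 i • v i.succ) := by
      rw [← weightSeries_comp_equiv _ splitFirst]
      congr 1
      funext x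
      rw [Fin.sum_univ_succ, ← add_assoc]
      rfl
    rw [Fin.prod_univ_succ, mul_assoc, reindex,
      ih (fun x : α × ℕ => w x.1 + x.2 • v 0) fun i => hv i.succ,
      one_sub_monomial_mul_weightSeries w (hv 0)]

lemma prod_one_sub_monomial_mul_weightSeries {ι : Type*} [Fintype ι] (w : α → σ →₀ ℕ)
    [∀ d, Finite {a // w a = d}] {v : ι → σ →₀ ℕ} (hv : ∀ i, v i ≠ 0) :
    (∏ i, (1 - MvPowerSeries.monomial (v i) 1)) *
      weightSeries (fun x : α × (ι → ℕ) => w x.1 + ∑ i, x.2 i • v i) = weightSeries w := by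
  let e := (Fintype.equivFin ι).symm
  rw [← prod_fin_one_sub_monomial_mul_weightSeries w fun i => hv (e i),
    ← e.prod_comp fun i => 1 - MvPowerSeries.monomial (v i) 1,
    ← weightSeries_comp_equiv _ ((Equiv.refl α).prodCongr (e.symm.arrowCongr (Equiv.refl ℕ)))]
  congr 2
  funext x
  exact congrArg (w x.1 + ·) (e.sum_comp fun i => x.2 i • v i).symm

end WeightSeries

section PartialSums

variable {α : Type*} [LinearOrder α] [LocallyFiniteOrderBot α]

lemma sup_Iio_sum_Iic (m : α → ℕ) (p : α) :
    (Finset.Iio p).sup (fun q => ∑ j ∈ Finset.Iic q, m j) = ∑ j ∈ Finset.Iio p, m j := by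
  refine le_antisymm (Finset.sup_le fun q hq => Finset.sum_le_sum_of_subset fun j hj => ?_) ?_
  · exact Finset.mem_Iio.mpr ((Finset.mem_Iic.mp hj).trans_lt (Finset.mem_Iio.mp hq))
  · rcases (Finset.Iio p).eq_empty_or_nonempty with h | h
    · rw [h, Finset.sum_empty]
      exact Nat.zero_le _
    · calc ∑ j ∈ Finset.Iio p, m j
          ≤ ∑ j ∈ Finset.Iic ((Finset.Iio p).max' h), m j :=
            Finset.sum_le_sum_of_subset fun j hj => Finset.mem_Iic.mpr (Finset.le_max' _ j hj)
        _ ≤ _ := Finset.le_sup (f := fun q => ∑ j ∈ Finset.Iic q, m j) (Finset.max'_mem _ h)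

variable [WellFoundedLT α]

lemma sum_Iic_tsub_sup_Iio (b : α →o ℕ) (p : α) :
    ∑ j ∈ Finset.Iic p, (b j - (Finset.Iio j).sup b) = b p := by
  induction p using WellFoundedLT.induction with
  | ind p ih =>
    have sum_Iio : ∑ j ∈ Finset.Iio p, (b j - (Finset.Iio j).sup b) = (Finset.Iio p).sup b := by
      rw [← sup_Iio_sum_Iic]
      exact Finset.sup_congr rfl fun q hq => ih q (Finset.mem_Iio.mp hq)
    rw [← Finset.sum_Iio_add_eq_sum_Iic, sum_Iio]
    exact add_tsub_cancel_of_le (Finset.sup_le fun q hq => b.mono (Finset.mem_Iio.mp hq).le)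

/-- Families of natural numbers correspond to weakly increasing families, by taking partial sums
and, conversely, differences of consecutive values. -/
def partialSums : (α → ℕ) ≃ (α →o ℕ) where
  toFun m :=
    ⟨fun p => ∑ j ∈ Finset.Iic p, m j,
      fun _ _ h => Finset.sum_le_sum_of_subset (Finset.Iic_subset_Iic.mpr h)⟩
  invFun b p := b p - (Finset.Iio p).sup b
  left_inv m := by
    funext p
    change ∑ j ∈ Finset.Iic p, m j - (Finset.Iio p).sup (fun q => ∑ j ∈ Finset.Iic q, m j) = m p
    rw [sup_Iio_sum_Iic, ← Finset.sum_Iio_add_eq_sum_Iic, add_tsub_cancel_left]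
  right_inv b := OrderHom.ext _ _ (funext (sum_Iic_tsub_sup_Iio b))

end PartialSums

section Pochhammer

variable {n k : ℕ}

lemma sum_partialSums (m : Fin n → ℕ) : ∑ p, partialSums m p = ∑ j, m j * (n - j) := by
  change ∑ p, ∑ j ∈ Finset.Iic p, m j = _
  rw [Finset.sum_comm' (t' := Finset.univ) (s' := Finset.Ici) (by simp)]
  simp [mul_comm]

lemma pochAll_eq_prod_monomial (n k : ℕ) :
    pochAll n k =
      ∏ x : Fin k × Fin n, (1 - MvPowerSeries.monomial (Finsupp.single x.1 (n - x.2)) 1) := by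
  rw [Fintype.prod_prod_type]
  refine Finset.prod_congr rfl fun i _ => ?_
  simp_rw [← MvPowerSeries.X_pow_eq]
  have rev_val (j : Fin n) : n - (Fin.rev j : ℕ) = 1 + j := by
    rw [Fin.val_rev]
    omega
  rw [pochOne, ← Equiv.prod_comp Fin.revPerm]
  simp only [Fin.revPerm_apply, rev_val]
  rw [Fin.prod_univ_eq_prod_range fun j => 1 - (MvPowerSeries.X i : MvPowerSeries _ ℤ) ^ (1 + j),
    ← Finset.Ico_add_one_right_eq_Icc, Finset.prod_Ico_eq_prod_range, add_tsub_cancel_right]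

/-- The exponent of `∏ i, q_{i+1} ^ (∑ p, b i p)`. -/
def sumExp (b : Fin k → Fin n →o ℕ) : Fin k →₀ ℕ :=
  Finsupp.equivFunOnFinite.symm fun i => ∑ p, b i p

lemma sumExp_partialSums (m : Fin k × Fin n → ℕ) :
    sumExp (fun i => partialSums fun j => m (i, j)) =
      ∑ x, m x • Finsupp.single x.1 (n - (x.2 : ℕ)) := by
  ext i
  rw [Fintype.sum_prod_type, Finsupp.finsetSum_apply, Finset.sum_eq_single i]
  · simp [sumExp, sum_partialSums, Finsupp.finsetSum_apply]
  · intro l _ hl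
    simp [Finsupp.finsetSum_apply, hl]
  · simp

lemma pochAll_mul_weightSeries {β : Type*} (w : β → Fin k →₀ ℕ) [∀ d, Finite {b // w b = d}] :
    pochAll n k * weightSeries (fun x : β × (Fin k → Fin n →o ℕ) => w x.1 + sumExp x.2) =
      weightSeries w := by
  have single_ne_zero (x : Fin k × Fin n) : Finsupp.single x.1 (n - (x.2 : ℕ)) ≠ 0 :=
    Finsupp.single_ne_zero.mpr (Nat.sub_ne_zero_of_lt x.2.isLt)
  rw [← prod_one_sub_monomial_mul_weightSeries w single_ne_zero, pochAll_eq_prod_monomial,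
    ← weightSeries_comp_equiv _ ((Equiv.refl β).prodCongr
      ((Equiv.curry (Fin k) (Fin n) ℕ).trans (Equiv.piCongrRight fun _ => partialSums)))]
  congr 2
  funext x
  exact congrArg (w x.1 + ·) (sumExp_partialSums x.2)

end Pochhammer

section ReadingOrder

variable {n r r' : ℕ} (R : Finset ℕ)

/-- The index of the class of `a` under the relation of being `R`-neighbors; these classes are
intervals. -/
def blockIndex (a : ℕ) : ℕ :=
  Nat.count (· ∉ R) a

lemma blockIndex_mono : Monotone (blockIndex R) :=
  Nat.count_monotone _

variable {R} in
lemma rNbr_iff_blockIndex_eq {a b : ℕ} (hab : a < b) :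
    RNbr R a b ↔ blockIndex R a = blockIndex R b := by
  obtain ⟨d, rfl⟩ := Nat.exists_eq_add_of_le hab.le
  rw [blockIndex, blockIndex, Nat.count_add, left_eq_add, Nat.count_iff_forall_not, RNbr,
    min_eq_left hab.le, max_eq_right hab.le]
  simp only [not_not]
  refine ⟨fun h m hm => h _ (by simp [hm]), fun h t ht => ?_⟩
  obtain ⟨m, rfl⟩ := Nat.exists_eq_add_of_le (Finset.mem_Ico.mp ht).1
  exact h m (by simpa using ht)

/-- The order in which equal sequences are read: block by block, and backwards inside a block. -/
def tieKey (a : ℕ) : ℕ ×ₗ ℕᵒᵈ :=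
  toLex (blockIndex R a, OrderDual.toDual a)

lemma tieKey_lt_tieKey_iff (a b : ℕ) :
    tieKey R a < tieKey R b ↔ (a < b ∧ ¬RNbr R a b) ∨ (b < a ∧ RNbr R b a) := by
  have tieKey_lt : tieKey R a < tieKey R b ↔
      blockIndex R a < blockIndex R b ∨ blockIndex R a = blockIndex R b ∧ b < a :=
    Prod.Lex.toLex_lt_toLex
  rw [tieKey_lt]
  rcases lt_trichotomy a b with hab | rfl | hab
  · have := blockIndex_mono R hab.le
    rw [rNbr_iff_blockIndex_eq hab]
    omega
  · simp
  · have := blockIndex_mono R hab.le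
    rw [rNbr_iff_blockIndex_eq hab]
    omega

/-- The reading order of `S` is the pull-back of a linear order along this injective key. -/
def readingKey (S : Fin n → Seq r) (v : Fin n) : Lex (Seq r) ×ₗ (ℕ ×ₗ ℕᵒᵈ) :=
  toLex (toLex (S v), tieKey R (v + 1))

lemma readingKey_injective (S : Fin n → Seq r) : Function.Injective (readingKey R S) :=
  fun _ _ h => Fin.ext (Nat.succ_injective (congrArg (fun x => (ofLex (ofLex x).2).2) h))

lemma readingKey_lt_readingKey_iff (S : Fin n → Seq r) (u v : Fin n) :
    readingKey R S u < readingKey R S v ↔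
      toLex (S u) < toLex (S v) ∨ S u = S v ∧ tieKey R (u + 1) < tieKey R (v + 1) :=
  Prod.Lex.toLex_lt_toLex

lemma sget_val_add_one (S : Fin n → Seq r) (v : Fin n) : sget S (v + 1) = S v := by
  simp [sget]

lemma pget_val_add_one (σ : Equiv.Perm (Fin n)) (v : Fin n) : pget σ (v + 1) = σ v + 1 := by
  simp [pget]

lemma val_add_one_eq_of_covBy {u v : Fin n} (huv : u ⋖ v) : (u : ℕ) + 1 = v :=
  Nat.covBy_iff_add_one_eq.mp (Fin.covBy_iff.mp huv)

lemma pget_val_of_covBy (σ : Equiv.Perm (Fin n)) {u v : Fin n} (huv : u ⋖ v) :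
    pget σ v = σ u + 1 := by
  rw [← val_add_one_eq_of_covBy huv, pget_val_add_one]

lemma mem_Icc_iff_exists_covBy {i : ℕ} :
    i ∈ Finset.Icc 1 (n - 1) ↔ ∃ u v : Fin n, u ⋖ v ∧ (v : ℕ) = i := by
  rw [Finset.mem_Icc]
  constructor
  · rintro ⟨h1, hn⟩
    exact ⟨⟨i - 1, by omega⟩, ⟨i, by omega⟩,
      Fin.covBy_iff.mpr (Nat.covBy_iff_add_one_eq.mpr (Nat.sub_add_cancel h1)), rfl⟩
  · rintro ⟨u, v, huv, rfl⟩
    have := val_add_one_eq_of_covBy huv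
    omega

lemma readBefore_val_add_one_iff (S : Fin n → Seq r) (u v : Fin n) :
    readBefore R S (u + 1) (v + 1) ↔ readingKey R S u < readingKey R S v := by
  rw [readBefore, sget_val_add_one, sget_val_add_one, ← tieKey_lt_tieKey_iff,
    readingKey_lt_readingKey_iff]
  rfl

lemma desCond_iff_readBefore (S : Fin n → Seq r) (σ : Equiv.Perm (Fin n)) (i : ℕ) :
    desCond R S σ i ↔ readBefore R S (pget σ (i + 1)) (pget σ i) := by
  rw [desCond, readBefore, lexLe]
  split_ifs with h <;> simp only [h, and_true, and_false, or_false]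

lemma mem_desSet_iff_of_covBy (S : Fin n → Seq r) (σ : Equiv.Perm (Fin n)) {u v : Fin n}
    (huv : u ⋖ v) :
    (v : ℕ) ∈ DesSet R S σ ↔ readingKey R S (σ v) < readingKey R S (σ u) := by
  rw [DesSet, Finset.mem_filter, and_iff_right (mem_Icc_iff_exists_covBy.mpr ⟨u, v, huv, rfl⟩),
    desCond_iff_readBefore, pget_val_of_covBy σ huv, pget_val_add_one, readBefore_val_add_one_iff]

/-- The reading permutation `σ_R(S)`. -/
def readingPerm (S : Fin n → Seq r) : Equiv.Perm (Fin n) :=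
  Tuple.sort (readingKey R S)

variable {R}

lemma readingPerm_eq_iff {S : Fin n → Seq r} {σ : Equiv.Perm (Fin n)} :
    readingPerm R S = σ ↔ StrictMono (readingKey R S ∘ σ) := by
  have hinj := (readingKey_injective R S).comp σ.injective
  rw [eq_comm, readingPerm, Tuple.eq_sort_iff]
  exact ⟨fun h => h.1.strictMono_of_injective hinj,
    fun h => ⟨h.monotone, fun _ _ hij heq => absurd (hinj heq) hij.ne⟩⟩

lemma isReading_iff {S : Fin n → Seq r} {σ : Equiv.Perm (Fin n)} :
    IsReading R S σ ↔ readingPerm R S = σ := by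
  rw [readingPerm_eq_iff, strictMono_iff_forall_covBy]
  have readBefore_iff {u v : Fin n} (huv : u ⋖ v) :
      readBefore R S (pget σ v) (pget σ (v + 1)) ↔
        readingKey R S (σ u) < readingKey R S (σ v) := by
    rw [pget_val_of_covBy σ huv, pget_val_add_one, readBefore_val_add_one_iff]
  constructor
  · intro h u v huv
    exact (readBefore_iff huv).mp (h v (mem_Icc_iff_exists_covBy.mpr ⟨u, v, huv, rfl⟩))
  · intro h i hi
    obtain ⟨u, v, huv, rfl⟩ := mem_Icc_iff_exists_covBy.mp hi
    exact (readBefore_iff huv).mpr (h u v huv)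

lemma readingKey_lt_iff_readingPerm_symm_lt (S : Fin n → Seq r) (u v : Fin n) :
    readingKey R S u < readingKey R S v ↔
      (readingPerm R S).symm u < (readingPerm R S).symm v := by
  have h : StrictMono (readingKey R S ∘ readingPerm R S) := readingPerm_eq_iff.mp rfl
  simpa using h.lt_iff_lt (a := (readingPerm R S).symm u) (b := (readingPerm R S).symm v)

lemma desSet_congr {S : Fin n → Seq r} {S' : Fin n → Seq r'}
    (h : readingPerm R S = readingPerm R S') : DesSet R S = DesSet R S' := by
  funext σ
  refine Finset.filter_congr fun i hi => ?_
  obtain ⟨u, v, huv, rfl⟩ := mem_Icc_iff_exists_covBy.mp hi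
  rw [desCond_iff_readBefore, desCond_iff_readBefore, pget_val_of_covBy σ huv, pget_val_add_one,
    readBefore_val_add_one_iff, readBefore_val_add_one_iff, readingKey_lt_iff_readingPerm_symm_lt,
    readingKey_lt_iff_readingPerm_symm_lt, h]

end ReadingOrder

section Prepending

variable {n r : ℕ} (R : Finset ℕ)

/-- The number of descents of `σ` at positions strictly before `p`. -/
def descentsBefore (S : Fin n → Seq r) (σ : Equiv.Perm (Fin n)) (p : Fin n) : ℕ :=
  (DesSet R S σ ∩ Finset.Ico 1 (p + 1)).card

lemma descentsBefore_of_covBy (S : Fin n → Seq r) (σ : Equiv.Perm (Fin n)) {u v : Fin n}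
    (huv : u ⋖ v) :
    descentsBefore R S σ v =
      descentsBefore R S σ u + if (v : ℕ) ∈ DesSet R S σ then 1 else 0 := by
  have hv : 1 ≤ (v : ℕ) := by
    have := val_add_one_eq_of_covBy huv
    omega
  rw [descentsBefore, descentsBefore, val_add_one_eq_of_covBy huv,
    ← Finset.insert_Ico_right_eq_Ico_add_one hv]
  split_ifs with h
  · rw [Finset.inter_insert_of_mem h, Finset.card_insert_of_notMem (by simp)]
  · rw [Finset.inter_insert_of_notMem h, add_zero]

lemma descentsBefore_congr {r' : ℕ} {S : Fin n → Seq r} {S' : Fin n → Seq r'}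
    (h : readingPerm R S = readingPerm R S') : descentsBefore R S = descentsBefore R S' := by
  funext σ p
  rw [descentsBefore, descentsBefore, desSet_congr h]

lemma readingKey_cons_lt_iff (a : Fin n → ℕ) (S : Fin n → Seq r) (u v : Fin n) :
    readingKey R (fun x => (Fin.cons (a x) (S x) : Seq (r + 1))) u <
        readingKey R (fun x => (Fin.cons (a x) (S x) : Seq (r + 1))) v ↔
      a u < a v ∨ a u = a v ∧ readingKey R S u < readingKey R S v := by
  have cons_lt : toLex (Fin.cons (a u) (S u) : Seq (r + 1)) < toLex (Fin.cons (a v) (S v)) ↔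
      a u < a v ∨ a u = a v ∧ toLex (S u) < toLex (S v) :=
    Fin.pi_lex_lt_cons_cons _
  rw [readingKey_lt_readingKey_iff, readingKey_lt_readingKey_iff, cons_lt, Fin.cons_inj]
  tauto

variable {R}

lemma readingPerm_cons_eq_iff {a : Fin n → ℕ} {S : Fin n → Seq r} {σ : Equiv.Perm (Fin n)} :
    readingPerm R (fun v => (Fin.cons (a v) (S v) : Seq (r + 1))) = σ ↔
      Monotone fun p => (a (σ p) : ℤ) - descentsBefore R S σ p := by
  rw [readingPerm_eq_iff, strictMono_iff_forall_covBy, monotone_iff_forall_covBy]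
  refine forall_congr' fun u => forall_congr' fun v => imp_congr_right fun huv => ?_
  have key_ne : readingKey R S (σ u) ≠ readingKey R S (σ v) := fun h =>
    huv.ne (σ.injective (readingKey_injective R S h))
  simp only [Function.comp_apply, readingKey_cons_lt_iff, descentsBefore_of_covBy R S σ huv,
    mem_desSet_iff_of_covBy R S σ huv]
  rcases key_ne.lt_or_gt with h | h
  · simp only [h, h.not_gt, and_true, if_false]
    omega
  · simp only [h, h.not_gt, and_false, or_false, if_true]
    omega

lemma exists_orderHom_add_eq {f g : Fin n → ℕ} (hg : ∀ p : Fin n, (p : ℕ) = 0 → g p = 0)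
    (hfg : Monotone fun p => (f p : ℤ) - g p) : ∃ b : Fin n →o ℕ, ∀ p, g p + b p = f p := by
  have g_le_f (p : Fin n) : g p ≤ f p := by
    have h0 := hfg (show (⟨0, p.pos⟩ : Fin n) ≤ p from Nat.zero_le _)
    have := hg ⟨0, p.pos⟩ rfl
    dsimp only at h0
    omega
  refine ⟨⟨fun p => f p - g p, fun p q hpq => ?_⟩, fun p => add_tsub_cancel_of_le (g_le_f p)⟩
  have hpq := hfg hpq
  have := g_le_f p
  dsimp only at hpq ⊢
  omega

variable (R)

/-- Prepends to `S v`, for `v` at position `p` of `σ`, the number of descents of `σ` before `p`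
increased by `b p`. For `b = 0` this is the operator `Z_{R,σ}`. -/
def prepend (x : (Equiv.Perm (Fin n) × (Fin n →o ℕ)) × (Fin n → Seq r)) : Fin n → Seq (r + 1) :=
  fun v => Fin.cons (descentsBefore R x.2 x.1.1 (x.1.1.symm v) + x.1.2 (x.1.1.symm v)) (x.2 v)

lemma readingPerm_prepend (x : (Equiv.Perm (Fin n) × (Fin n →o ℕ)) × (Fin n → Seq r)) :
    readingPerm R (prepend R x) = x.1.1 := by
  refine readingPerm_cons_eq_iff.mpr ?_
  simp only [Equiv.symm_apply_apply, Nat.cast_add, add_sub_cancel_left]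
  exact Nat.mono_cast.comp x.1.2.mono

lemma prepend_injective : Function.Injective (prepend R : _ → Fin n → Seq (r + 1)) := by
  rintro ⟨⟨σ, b⟩, S⟩ ⟨⟨σ', b'⟩, S'⟩ h
  obtain rfl : σ = σ' := by
    simpa only [readingPerm_prepend] using congrArg (readingPerm R) h
  have h_cons (v : Fin n) := Fin.cons_inj.mp (congrFun h v)
  obtain rfl : S = S' := funext fun v => (h_cons v).2
  obtain rfl : b = b' := OrderHom.ext _ _ (funext fun p => by simpa using (h_cons (σ p)).1)
  rfl

lemma prepend_surjective : Function.Surjective (prepend R : _ → Fin n → Seq (r + 1)) := by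
  intro S'
  let S : Fin n → Seq r := fun v => Fin.tail (S' v)
  let σ := readingPerm R S'
  have hσ : readingPerm R (fun v => Fin.cons (S' v 0) (S v)) = σ :=
    congrArg (readingPerm R) (funext fun v => Fin.cons_self_tail (S' v))
  obtain ⟨b, hb⟩ := exists_orderHom_add_eq
    (fun p hp => by simp [descentsBefore, hp]) (readingPerm_cons_eq_iff.mp hσ)
  refine ⟨((σ, b), S), funext fun v => ?_⟩
  have hv := hb (σ.symm v)
  rw [Equiv.apply_symm_apply] at hv
  rw [prepend, hv]
  exact Fin.cons_self_tail (S' v)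

/-- Every list in `(ℕ^r)^n` arises from the empty list by `r` prepending steps, in a unique way. -/
def iteratedPrepend :
    (r : ℕ) → (Fin r → Equiv.Perm (Fin n) × (Fin n →o ℕ)) ≃ (Fin n → Seq r)
  | 0 => Equiv.ofUnique _ _
  | r + 1 =>
    (Fin.snocEquiv fun _ => _).symm.trans <|
      ((Equiv.refl _).prodCongr (iteratedPrepend r)).trans <|
        Equiv.ofBijective (prepend R) ⟨prepend_injective R, prepend_surjective R⟩

lemma iteratedPrepend_succ (d : Fin (r + 1) → Equiv.Perm (Fin n) × (Fin n →o ℕ)) :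
    iteratedPrepend R (r + 1) d =
      prepend R (d (Fin.last r), iteratedPrepend R r fun i => d i.castSucc) :=
  rfl

lemma readingPerm_iteratedPrepend_succ
    (d : Fin (r + 1) → Equiv.Perm (Fin n) × (Fin n →o ℕ)) :
    readingPerm R (iteratedPrepend R (r + 1) d) = (d (Fin.last r)).1 :=
  readingPerm_prepend R _

lemma zvec_eq_iteratedPrepend (σs : ℕ → Equiv.Perm (Fin n)) (r : ℕ) :
    Zvec R σs r = iteratedPrepend R r fun i => (σs i, ⊥) := by
  induction r with
  | zero => exact Subsingleton.elim _ _
  | succ r ih =>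
    rw [Zvec, ih]
    rfl

lemma readingPerm_iteratedPrepend_eq_zvec (σs : ℕ → Equiv.Perm (Fin n))
    (b : Fin r → Fin n →o ℕ) :
    readingPerm R (iteratedPrepend R r fun i => (σs i, b i)) = readingPerm R (Zvec R σs r) := by
  rw [zvec_eq_iteratedPrepend]
  cases r with
  | zero => exact congrArg _ (Subsingleton.elim _ _)
  | succ r => rw [readingPerm_iteratedPrepend_succ, readingPerm_iteratedPrepend_succ]

lemma iteratedPrepend_apply (σs : ℕ → Equiv.Perm (Fin n)) (b : Fin r → Fin n →o ℕ) (v : Fin n)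
    (j : Fin r) :
    iteratedPrepend R r (fun i => (σs i, b i)) v j =
      Zvec R σs r v j + b j.rev ((σs j.rev).symm v) := by
  induction r with
  | zero => exact j.elim0
  | succ r ih =>
    rw [iteratedPrepend_succ, Zvec]
    cases j using Fin.cases with
    | zero =>
      have := descentsBefore_congr R
        (readingPerm_iteratedPrepend_eq_zvec R σs fun i : Fin r => b i.castSucc)
      simp only [prepend, Zop, Fin.cons_zero, Fin.rev_zero, Fin.val_castSucc, Fin.val_last, this]
      rfl
    | succ j =>
      rw [Fin.rev_succ]
      exact ih (fun i => b i.castSucc) j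

lemma expOf_iteratedPrepend (σs : ℕ → Equiv.Perm (Fin n)) (b : Fin r → Fin n →o ℕ) :
    expOf (iteratedPrepend R r fun i => (σs i, b i)) = expOf (Zvec R σs r) + sumExp b := by
  ext i
  simp only [expOf, sumExp, Finsupp.add_apply, Finsupp.equivFunOnFinite_symm_apply_apply,
    iteratedPrepend_apply, Fin.rev_rev, Finset.sum_add_distrib, Equiv.sum_comp _ (b i)]

end Prepending

section Tableaux

variable {μ : YoungDiagram} {k : ℕ}

namespace SYT

variable (T : SYT μ)

lemma val_add_one_mem_Icc (i : Fin μ.card) : (i : ℕ) + 1 ∈ Finset.Icc 1 μ.card :=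
  Finset.mem_Icc.mpr ⟨Nat.le_add_left 1 i, i.isLt⟩

/-- The labelling of the cells of `μ` by the entries of `T`, numbered from `0`. -/
def cellEquiv : Fin μ.card ≃ μ.cells :=
  Equiv.ofBijective
    (fun i =>
      ⟨T.pos (i + 1), (YoungDiagram.mem_cells _).mpr (T.mem _ (val_add_one_mem_Icc i))⟩) <| by
    constructor
    · intro i j hij
      have := T.inj _ (val_add_one_mem_Icc i) _ (val_add_one_mem_Icc j) (congrArg Subtype.val hij)
      omega
    · rintro ⟨c, hc⟩
      obtain ⟨i, hi, rfl⟩ := T.surj c ((YoungDiagram.mem_cells _).mp hc)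
      obtain ⟨hi1, hin⟩ := Finset.mem_Icc.mp hi
      exact ⟨⟨i - 1, by omega⟩, Subtype.ext (congrArg T.pos (Nat.sub_add_cancel hi1))⟩

lemma coe_cellEquiv (i : Fin μ.card) : (T.cellEquiv i : ℕ × ℕ) = T.pos (i + 1) :=
  rfl

lemma cellEquiv_injective :
    Function.Injective (cellEquiv : SYT μ → (Fin μ.card ≃ μ.cells)) := by
  intro T T' h
  have pos_eq : T.pos = T'.pos := by
    funext i
    by_cases hi : i ∈ Finset.Icc 1 μ.card
    · obtain ⟨hi1, hin⟩ := Finset.mem_Icc.mp hi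
      have := congrArg Subtype.val (DFunLike.congr_fun h ⟨i - 1, by omega⟩)
      rwa [coe_cellEquiv, coe_cellEquiv, Nat.sub_add_cancel hi1] at this
    · rw [T.junk i hi, T'.junk i hi]
  cases T
  cases T'
  congr

instance : Finite (SYT μ) :=
  Finite.of_injective _ cellEquiv_injective

end SYT

lemma fillOf_cellEquiv (T : SYT μ) (S : Fin μ.card → Seq k) (i : Fin μ.card) :
    fillOf k T (sget S) (T.cellEquiv i) = S i := by
  have h : ∃ j, j ∈ Finset.Icc 1 μ.card ∧ T.pos j = T.cellEquiv i :=
    ⟨i + 1, SYT.val_add_one_mem_Icc i, rfl⟩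
  have h_choose : h.choose = i + 1 :=
    T.inj _ h.choose_spec.1 _ (SYT.val_add_one_mem_Icc i) h.choose_spec.2
  rw [fillOf, dif_pos h, h_choose, sget_val_add_one]

lemma expFill_fillOf (T : SYT μ) (S : Fin μ.card → Seq k) :
    expFill μ (fillOf k T (sget S)) = expOf S := by
  ext i
  simp only [expFill, expOf, Finsupp.equivFunOnFinite_symm_apply_apply,
    ← Finset.sum_coe_sort μ.cells, ← T.cellEquiv.sum_comp, fillOf_cellEquiv]

/-- The order of cells in which cells of equal content are compared by going up row by row, each
row from left to right. -/
def cellTieKey (c : ℕ × ℕ) : ℕᵒᵈ ×ₗ ℕ :=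
  toLex (OrderDual.toDual c.1, c.2)

/-- A filling `P` orders the cells by content, with ties broken by `cellTieKey`. -/
def cellKey (P : ℕ × ℕ → Seq k) (c : ℕ × ℕ) : Lex (Seq k) ×ₗ (ℕᵒᵈ ×ₗ ℕ) :=
  toLex (toLex (P c), cellTieKey c)

lemma cellKey_injective (P : ℕ × ℕ → Seq k) : Function.Injective (cellKey P) :=
  fun _ _ h => Prod.ext (congrArg (fun x => (ofLex (ofLex x).2).1) h)
    (congrArg (fun x => (ofLex (ofLex x).2).2) h)

lemma cellTieKey_lt_of_notMem_desSYT (T : SYT μ) {u v : Fin μ.card} (huv : u ⋖ v)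
    (hv : (v : ℕ) ∉ desSYT T) : cellTieKey (T.cellEquiv u) < cellTieKey (T.cellEquiv v) := by
  have hu := SYT.val_add_one_mem_Icc u
  have hv' := SYT.val_add_one_mem_Icc v
  rw [desSYT, Finset.mem_filter, and_iff_right (mem_Icc_iff_exists_covBy.mpr ⟨u, v, huv, rfl⟩),
    not_lt] at hv
  rw [cellTieKey, cellTieKey, Prod.Lex.toLex_lt_toLex, T.coe_cellEquiv, T.coe_cellEquiv]
  rw [← val_add_one_eq_of_covBy huv] at hv hv' ⊢
  rcases hv.lt_or_eq with hrow | hrow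
  · exact Or.inl hrow
  · refine Or.inr ⟨congrArg OrderDual.toDual hrow.symm, ?_⟩
    by_contra hcol
    rcases (not_lt.mp hcol).lt_or_eq with hcol | hcol
    · have := T.row_inc _ hv' _ hu hrow hcol
      omega
    · have := T.inj _ hv' _ hu (Prod.ext hrow hcol)
      omega

lemma strictMono_cellKey_fillOf {T : SYT μ} {S : Fin μ.card → Seq k}
    (hS : IsReading (desSYT T) S 1) :
    StrictMono fun i => cellKey (fillOf k T (sget S)) (T.cellEquiv i) := by
  rw [strictMono_iff_forall_covBy]
  intro u v huv
  rw [cellKey, cellKey, Prod.Lex.toLex_lt_toLex]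
  simp only [fillOf_cellEquiv]
  have hlt := readingPerm_eq_iff.mp (isReading_iff.mp hS) huv.lt
  refine ((readingKey_lt_readingKey_iff _ S u v).mp hlt).imp_right fun ⟨heq, htie⟩ =>
    ⟨congrArg toLex heq, cellTieKey_lt_of_notMem_desSYT T huv fun hmem => ?_⟩
  rw [val_add_one_eq_of_covBy huv, tieKey_lt_tieKey_iff] at htie
  refine htie.elim (fun h => h.2 fun t ht => ?_) fun h => ?_
  · obtain rfl : t = v := by simpa using ht
    exact hmem
  · omega

lemma fillOf_injOn :
    Set.InjOn (fun x : SYT μ × (Fin μ.card → Seq k) => fillOf k x.1 (sget x.2))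
      {x | IsReading (desSYT x.1) x.2 1} := by
  rintro ⟨T, S⟩ hS ⟨T', S'⟩ hS' (hP : fillOf k T (sget S) = fillOf k T' (sget S'))
  set P := fillOf k T (sget S)
  have range_eq (T : SYT μ) :
      Set.range (fun i => cellKey P (T.cellEquiv i)) = Set.range fun c : μ.cells => cellKey P c :=
    T.cellEquiv.surjective.range_comp fun c => cellKey P c
  have key_eq : (fun i => cellKey P (T.cellEquiv i)) = fun i => cellKey P (T'.cellEquiv i) := by
    refine ((strictMono_cellKey_fillOf hS).range_inj ?_).mp ((range_eq T).trans (range_eq T').symm)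
    rw [hP]
    exact strictMono_cellKey_fillOf hS'
  obtain rfl : T = T' := SYT.cellEquiv_injective <| Equiv.ext fun i =>
    Subtype.ext (cellKey_injective P (congrFun key_eq i))
  refine Prod.ext rfl (funext fun i => ?_)
  calc S i = P (T.cellEquiv i) := (fillOf_cellEquiv T S i).symm
    _ = S' i := by rw [hP, fillOf_cellEquiv]

end Tableaux

section Parametrization

variable {n k : ℕ}

lemma extFun_val (σv : Fin k → Equiv.Perm (Fin n)) (i : Fin k) : extFun σv i = σv i :=
  dif_pos i.isLt

lemma extFun_self (σv : Fin k → Equiv.Perm (Fin n)) : extFun σv k = 1 :=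
  dif_neg (lt_irrefl k)

variable (R : Finset ℕ)

lemma isReading_iteratedPrepend_extFun (σv : Fin k → Equiv.Perm (Fin n))
    (b : Fin (k + 1) → Fin n →o ℕ) :
    IsReading R (iteratedPrepend R (k + 1) fun i => (extFun σv i, b i)) 1 := by
  rw [isReading_iff, readingPerm_iteratedPrepend_succ]
  exact extFun_self σv

lemma isReading_zvec_extFun (σv : Fin k → Equiv.Perm (Fin n)) :
    IsReading R (Zvec R (extFun σv) (k + 1)) 1 := by
  rw [zvec_eq_iteratedPrepend]
  exact isReading_iteratedPrepend_extFun R σv fun _ => ⊥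

lemma extFun_prod_injective :
    Function.Injective fun (x : (Fin k → Equiv.Perm (Fin n)) × (Fin (k + 1) → Fin n →o ℕ))
      (i : Fin (k + 1)) => (extFun x.1 i, x.2 i) := by
  rintro ⟨σv, b⟩ ⟨τv, c⟩ h
  refine Prod.ext (funext fun i => ?_) (funext fun i => congrArg Prod.snd (congrFun h i))
  simpa only [Fin.val_castSucc, extFun_val] using congrArg Prod.fst (congrFun h i.castSucc)

/-- The lists in `(ℕ^{k+1})^n` with reading permutation `ε`, parametrized by the permutations
`σ^1, …, σ^k` and the weakly increasing sequences of their prepending steps. -/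
def readingListEquiv :
    (Fin k → Equiv.Perm (Fin n)) × (Fin (k + 1) → Fin n →o ℕ) ≃
      {S : Fin n → Seq (k + 1) // IsReading R S 1} :=
  Equiv.ofBijective
    (fun x => ⟨_, isReading_iteratedPrepend_extFun R x.1 x.2⟩) <| by
    constructor
    · intro x y h
      exact extFun_prod_injective ((iteratedPrepend R _).injective (congrArg Subtype.val h))
    · rintro ⟨S, hS⟩
      obtain ⟨d, rfl⟩ := (iteratedPrepend R _).surjective S
      rw [isReading_iff, readingPerm_iteratedPrepend_succ] at hS
      refine ⟨(fun i => (d i.castSucc).1, fun i => (d i).2), Subtype.ext <|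
        congrArg (iteratedPrepend R _) <| funext fun i => Prod.ext ?_ rfl⟩
      cases i using Fin.lastCases with
      | last => rw [hS]; exact extFun_self _
      | cast i => exact extFun_val _ i

lemma zvec_extFun_injective :
    Function.Injective fun σv : Fin k → Equiv.Perm (Fin n) => Zvec R (extFun σv) (k + 1) := by
  intro σv τv h
  simp only [zvec_eq_iteratedPrepend] at h
  exact congrArg Prod.fst <| extFun_prod_injective (a₁ := (σv, fun _ => ⊥))
    (a₂ := (τv, fun _ => ⊥)) ((iteratedPrepend R _).injective h)

variable (μ : YoungDiagram) (k)

/-- The pairs of a tableau `T` and a list with reading permutation `ε` with respect to `des(T)`,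
parametrized by `T`, the permutations and the weakly increasing sequences. -/
def tableauListEquiv :
    (SYT μ × (Fin k → Equiv.Perm (Fin μ.card))) × (Fin (k + 1) → Fin μ.card →o ℕ) ≃
      {x : SYT μ × (Fin μ.card → Seq (k + 1)) // IsReading (desSYT x.1) x.2 1} :=
  (Equiv.prodAssoc _ _ _).trans <| (Equiv.sigmaEquivProd _ _).symm.trans <|
    (Equiv.sigmaCongrRight fun T => readingListEquiv (desSYT T)).trans
      (Equiv.subtypeProdEquivSigmaSubtype fun T S => IsReading (desSYT T) S 1).symm

variable {k μ} in
lemma fillOf_zvec_injective :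
    Function.Injective fun x : SYT μ × (Fin k → Equiv.Perm (Fin μ.card)) =>
      fillOf (k + 1) x.1 (sget (Zvec (desSYT x.1) (extFun x.2) (k + 1))) := by
  rintro ⟨T, σv⟩ ⟨T', τv⟩ h
  have pair_eq := fillOf_injOn (x₁ := (T, Zvec (desSYT T) (extFun σv) (k + 1)))
    (x₂ := (T', Zvec (desSYT T') (extFun τv) (k + 1)))
    (isReading_zvec_extFun _ σv) (isReading_zvec_extFun _ τv) h
  obtain rfl : T = T' := congrArg Prod.fst pair_eq
  exact Prod.ext rfl (zvec_extFun_injective _ (congrArg Prod.snd pair_eq))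

/-- The set `𝒯^{k+1}_μ` of fillings is parametrized, without repetitions, by a tableau and `k`
permutations. -/
def tableauFillingEquiv :
    SYT μ × (Fin k → Equiv.Perm (Fin μ.card)) ≃
      {P : ℕ × ℕ → Seq (k + 1) // ∃ (T : SYT μ) (σv : Fin k → Equiv.Perm (Fin μ.card)),
        P = fillOf (k + 1) T (sget (Zvec (desSYT T) (extFun σv) (k + 1)))} :=
  Equiv.ofBijective (fun x => ⟨_, x.1, x.2, rfl⟩) <| by
    constructor
    · exact fun x y h => fillOf_zvec_injective (congrArg Subtype.val h)
    · rintro ⟨P, T, σv, rfl⟩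
      exact ⟨(T, σv), rfl⟩

lemma coe_tableauFillingEquiv (x : SYT μ × (Fin k → Equiv.Perm (Fin μ.card))) :
    (tableauFillingEquiv k μ x : ℕ × ℕ → Seq (k + 1)) =
      fillOf (k + 1) x.1 (sget (Zvec (desSYT x.1) (extFun x.2) (k + 1))) :=
  rfl

lemma countSeriesP_tableauList :
    countSeriesP (α := SYT μ × (Fin μ.card → Seq (k + 1)))
        (fun x d => IsReading (desSYT x.1) x.2 1 ∧ expOf x.2 = d) =
      weightSeries fun x : (SYT μ × (Fin k → Equiv.Perm (Fin μ.card))) ×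
          (Fin (k + 1) → Fin μ.card →o ℕ) =>
        expOf (Zvec (desSYT x.1.1) (extFun x.1.2) (k + 1)) + sumExp x.2 := by
  rw [countSeriesP_and_eq, ← weightSeries_comp_equiv _ (tableauListEquiv k μ)]
  exact congrArg weightSeries (funext fun x => expOf_iteratedPrepend _ _ x.2)

lemma countSeriesP_tableauFilling :
    countSeriesP
        (α := {P : ℕ × ℕ → Seq (k + 1) //
          ∃ (T : SYT μ) (σv : Fin k → Equiv.Perm (Fin μ.card)),
            P = fillOf (k + 1) T (sget (Zvec (desSYT T) (extFun σv) (k + 1)))})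
        (fun P d => expFill μ P.val = d) =
      weightSeries fun x : SYT μ × (Fin k → Equiv.Perm (Fin μ.card)) =>
        expOf (Zvec (desSYT x.1) (extFun x.2) (k + 1)) := by
  refine (weightSeries_comp_equiv _ (tableauFillingEquiv k μ)).symm.trans ?_
  refine congrArg weightSeries (funext fun x => ?_)
  rw [Function.comp_apply, coe_tableauFillingEquiv, expFill_fillOf]

end Parametrization

/-- **Theorem (tableau form of the finite evaluation).**
`(∏ᵢ (qᵢ;qᵢ)_n) ⬝ s_λ[1/((1−q_1)⋯(1−q_k))] = ∑_{P ∈ 𝒯^k_λ} q^P`,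
where `𝒯^k_λ = {P_{T,σ⃗}}` and the right-hand sum runs over the distinct
elements of `𝒯^k_λ`. -/
theorem tableaux_sum (n k : ℕ) (hn : 1 ≤ n) (hk : 1 ≤ k)
    (μ : YoungDiagram) (hμ : μ.card = n) :
    pochAll n k *
      countSeriesP (α := SYT μ × (Fin n → Seq k))
        (fun TS d => IsReading (desSYT TS.1) TS.2 1 ∧ expOf TS.2 = d) =
    countSeriesP
      (α := {P : ℕ × ℕ → Seq k // ∃ (T : SYT μ) (σv : Fin (k-1) → Equiv.Perm (Fin n)),
        P = fillOf k T (sget (Zvec (desSYT T) (extFun σv) k))})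
      (fun P d => expFill μ P.val = d) := by
  obtain ⟨k, rfl⟩ : ∃ k', k = k' + 1 := ⟨k - 1, (Nat.sub_add_cancel hk).symm⟩
  subst hμ
  calc
    _ = pochAll μ.card (k + 1) * weightSeries fun x : (SYT μ × (Fin k → Equiv.Perm (Fin μ.card))) ×
          (Fin (k + 1) → Fin μ.card →o ℕ) =>
          expOf (Zvec (desSYT x.1.1) (extFun x.1.2) (k + 1)) + sumExp x.2 := by
      rw [countSeriesP_tableauList]
    _ = weightSeries fun x : SYT μ × (Fin k → Equiv.Perm (Fin μ.card)) =>
          expOf (Zvec (desSYT x.1) (extFun x.2) (k + 1)) :=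
      pochAll_mul_weightSeries fun x : SYT μ × (Fin k → Equiv.Perm (Fin μ.card)) =>
          expOf (Zvec (desSYT x.1) (extFun x.2) (k + 1))
    _ = _ := (countSeriesP_tableauFilling k μ).symm

end

end RomeroComaj
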